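/- arXiv:1309.7415 — 2 statements merged into one kernel-verified Lean document; each statement's English description precedes it below -/
import Mathlib

section
/- Let V be a finite set, let V̂ = {0} ∪ V, and let E⁺, E⁻ ⊆ binom(V,2). Define Ĉ := {X̂ ∈ S₊^{V̂} : X̂_{00} = 1, X̂_{0i} = X̂_{ii} for all i ∈ V, X̂_{ij} ≥ 0 for ij ∈ E⁺, X̂_{ij} ≤ 0 for ij ∈ E⁻}. Then X̂ ∈ Ĉ is a vertex of Ĉ if and only if rank(X̂) = 1. -/
open Matrix

/-- The normal cone, within the space of symmetric matrices (with the trace inner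
product), of a set `C` of symmetric matrices at a point `X`. -/
def normalConeM {ι : Type*} [Fintype ι] (C : Set (Matrix ι ι ℝ)) (X : Matrix ι ι ℝ) :
    Set (Matrix ι ι ℝ) :=
  {c | c.IsSymm ∧ ∀ Y ∈ C, (c * Y).trace ≤ (c * X).trace}

/-- A point of a convex set of symmetric matrices is a vertex if its normal cone is
full-dimensional in the space `Sym(ι)` of symmetric matrices, whose dimension is
`card ι * (card ι + 1) / 2`. -/
def IsVertex {ι : Type*} [Fintype ι] (C : Set (Matrix ι ι ℝ)) (X : Matrix ι ι ℝ) : Prop :=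
  X ∈ C ∧ Module.finrank ℝ (Submodule.span ℝ (normalConeM C X))
      = Fintype.card ι * (Fintype.card ι + 1) / 2


def symSubM (ι : Type*) : Submodule ℝ (Matrix ι ι ℝ) where
  carrier := {c | c.IsSymm}
  add_mem' := fun ha hb => Matrix.IsSymm.add ha hb
  zero_mem' := Matrix.isSymm_zero
  smul_mem' := fun k _ ha => Matrix.IsSymm.smul ha k

def symSubEquiv (ι : Type*) : (Sym2 ι → ℝ) ≃ₗ[ℝ] symSubM ι where
  toFun f := ⟨Matrix.of fun i j => f s(i, j), by
    change Matrix.IsSymm _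
    ext i j
    simp [Sym2.eq_swap]⟩
  invFun M := Sym2.lift ⟨fun i j => M.1 i j, fun i j => by
    have h : M.1.IsSymm := M.2
    exact (h.apply j i)⟩
  map_add' f g := by ext i j; rfl
  map_smul' f g := by ext i j; rfl
  left_inv f := by
    ext z
    induction z using Sym2.ind with
    | _ i j => simp
  right_inv M := by ext i j; simp

lemma finrank_symSubM (ι : Type*) [Fintype ι] :
    Module.finrank ℝ (symSubM ι) = Fintype.card ι * (Fintype.card ι + 1) / 2 := by
  classical
  rw [← (symSubEquiv ι).finrank_eq, Module.finrank_fintype_fun_eq_card, Sym2.card,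
    Nat.choose_two_right, Nat.add_sub_cancel, Nat.mul_comm]

lemma span_normal_le {ι : Type*} [Fintype ι] (C : Set (Matrix ι ι ℝ)) (X : Matrix ι ι ℝ) :
    Submodule.span ℝ (normalConeM C X) ≤ symSubM ι :=
  Submodule.span_le.2 fun _ hc => hc.1

lemma isVertex_iff_span {ι : Type*} [Fintype ι] (C : Set (Matrix ι ι ℝ)) (X : Matrix ι ι ℝ)
    (hX : X ∈ C) :
    IsVertex C X ↔ Submodule.span ℝ (normalConeM C X) = symSubM ι := by
  unfold IsVertex
  rw [← finrank_symSubM]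
  constructor
  · rintro ⟨_, h⟩
    exact Submodule.eq_of_le_of_finrank_eq (span_normal_le C X) h
  · intro h
    exact ⟨hX, by rw [h]⟩

/-- quadratic form on `e_k - c e_0` -/
lemma quad_eval {V : Type*} [Fintype V] [DecidableEq V] (X : Matrix (Option V) (Option V) ℝ)
    (h00 : X none none = 1) (hsymm : ∀ i j, X i j = X j i)
    (h0 : ∀ i : V, X none (some i) = X (some i) (some i)) (k : V) (c : ℝ) :
    (Pi.single (some k) 1 - c • Pi.single none 1 : Option V → ℝ) ⬝ᵥ
      (X *ᵥ (Pi.single (some k) 1 - c • Pi.single none 1)) =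
      X (some k) (some k) - 2 * c * X (some k) (some k) + c ^ 2 := by
  simp [Matrix.mulVec_sub, Matrix.mulVec_smul, sub_dotProduct, h00, h0, hsymm (some k) none]
  ring

lemma X_eq_of_idem {V : Type*} [Fintype V] [DecidableEq V] (X : Matrix (Option V) (Option V) ℝ)
    (hP : X.PosSemidef) (h00 : X none none = 1) (hsymm : ∀ i j, X i j = X j i)
    (h0 : ∀ i : V, X none (some i) = X (some i) (some i))
    (h : ∀ k : V, X (some k) (some k) ^ 2 = X (some k) (some k)) :
    X = vecMulVec (X none) (X none) := by
  have key : ∀ k j, X j (some k) = X (some k) (some k) * X j none := by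
    intro k j
    have h1 := quad_eval X h00 hsymm h0 k (X (some k) (some k))
    have h2 : X *ᵥ (Pi.single (some k) 1 - X (some k) (some k) • Pi.single none 1) = 0 := by
      rw [← hP.dotProduct_mulVec_zero_iff]
      rw [star_trivial, h1]
      linear_combination (-1) * h k
    have h3 := congrFun h2 j
    simp [Matrix.mulVec_sub, Matrix.mulVec_smul] at h3
    linarith
  ext i j
  rw [vecMulVec_apply]
  cases j with
  | none => rw [h00, mul_one, hsymm]
  | some k => rw [key, hsymm i none, h0]; ring

lemma rank_one_iff {V : Type*} [Fintype V] [DecidableEq V] (X : Matrix (Option V) (Option V) ℝ)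
    (hP : X.PosSemidef) (h00 : X none none = 1) (hsymm : ∀ i j, X i j = X j i)
    (h0 : ∀ i : V, X none (some i) = X (some i) (some i)) :
    X.rank = 1 ↔ ∀ k : V, X (some k) (some k) ^ 2 = X (some k) (some k) := by
  constructor
  · intro h k
    rw [Matrix.rank] at h
    let v : LinearMap.range X.mulVecLin := ⟨X.mulVecLin (Pi.single none 1), ⟨_, rfl⟩⟩
    let w : LinearMap.range X.mulVecLin := ⟨X.mulVecLin (Pi.single (some k) 1), ⟨_, rfl⟩⟩
    have hv : v ≠ 0 := by
      intro hv
      have h1 := congrFun (congrArg Subtype.val hv) none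
      simp [v, h00] at h1
    obtain ⟨c, hc⟩ := (finrank_eq_one_iff_of_nonzero' v hv).1 h w
    have h1 := congrFun (congrArg Subtype.val hc) none
    have h2 := congrFun (congrArg Subtype.val hc) (some k)
    simp [v, w, h00, h0, hsymm (some k) none] at h1 h2
    rw [h1] at h2
    rw [sq, h2]
  · intro h
    have hx := X_eq_of_idem X hP h00 hsymm h0 h
    apply le_antisymm
    · rw [hx]; exact rank_vecMulVec_le _ _
    · rw [Nat.one_le_iff_ne_zero]
      intro h1
      rw [Matrix.rank, Submodule.finrank_eq_zero] at h1
      have h2 : X.mulVecLin (Pi.single none 1) ∈ LinearMap.range X.mulVecLin := ⟨_, rfl⟩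
      rw [h1, Submodule.mem_bot] at h2
      have h3 := congrFun h2 none
      simp [h00] at h3

lemma vec_trace {ι : Type*} [Fintype ι] (v w : ι → ℝ) (Y : Matrix ι ι ℝ) :
    (vecMulVec v w * Y).trace = w ⬝ᵥ (Y *ᵥ v) := by
  rw [Matrix.trace_mul_comm, Matrix.mul_vecMulVec, Matrix.trace_vecMulVec, dotProduct_comm]

lemma span_full {V : Type*} [Fintype V] [DecidableEq V] (C : Set (Matrix (Option V) (Option V) ℝ))
    (hC : ∀ X ∈ C, X.PosSemidef ∧ X none none = 1 ∧
      (∀ i : V, X none (some i) = X (some i) (some i)))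
    (X : Matrix (Option V) (Option V) ℝ) (hX : X ∈ C)
    (h : ∀ k : V, X (some k) (some k) ^ 2 = X (some k) (some k)) :
    symSubM (Option V) ≤ Submodule.span ℝ (normalConeM C X) := by
  have hs : ∀ Y ∈ C, ∀ i j, Y i j = Y j i := fun Y hY i j => by
    simpa using (hC Y hY).1.isHermitian.apply j i
  set S := Submodule.span ℝ (normalConeM C X) with hS
  have hXX := X_eq_of_idem X (hC X hX).1 (hC X hX).2.1 (hs X hX) (hC X hX).2.2 h
  set e : Option V → Option V → ℝ := fun i => Pi.single i 1 with he
  set x : V → ℝ := fun i => X (some i) (some i) with hx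
  have tr : ∀ i j (Y : Matrix (Option V) (Option V) ℝ),
      (vecMulVec (e i) (e j) * Y).trace = Y j i := by
    intro i j Y
    rw [vec_trace]; simp [he]
  -- rank one elements
  have hv : ∀ v, X none ⬝ᵥ v = 0 → vecMulVec v v ∈ S := by
    intro v hv
    rw [← neg_mem_iff]
    apply Submodule.subset_span
    refine ⟨?_, ?_⟩
    · ext i j; simp [vecMulVec_apply, mul_comm]
    · intro Y hY
      have h1 : X *ᵥ v = 0 := by
        rw [hXX, vecMulVec_mulVec, hv]; simp
      rw [neg_mul, neg_mul, trace_neg, trace_neg, vec_trace, vec_trace, h1]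
      have := (hC Y hY).1.dotProduct_mulVec_nonneg v
      simp at this ⊢
      exact this
  have h00 : vecMulVec (e none) (e none) ∈ S := by
    apply Submodule.subset_span
    refine ⟨?_, ?_⟩
    · ext i j; simp [vecMulVec_apply, mul_comm]
    · intro Y hY
      rw [tr, tr, (hC Y hY).2.1, (hC X hX).2.1]
  have hA : ∀ i, vecMulVec (e none) (e (some i)) + vecMulVec (e (some i)) (e none)
      - (2 : ℝ) • vecMulVec (e (some i)) (e (some i)) ∈ S := by
    intro i
    apply Submodule.subset_span
    refine ⟨?_, ?_⟩
    · ext a b; simp [vecMulVec_apply]; ring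
    · have : ∀ Y ∈ C, ((vecMulVec (e none) (e (some i)) + vecMulVec (e (some i)) (e none)
          - (2 : ℝ) • vecMulVec (e (some i)) (e (some i))) * Y).trace = 0 := by
        intro Y hY
        rw [sub_mul, add_mul, trace_sub, trace_add, smul_mul, trace_smul, tr, tr, tr,
          hs Y hY (some i) none, (hC Y hY).2.2, smul_eq_mul]
        ring
      intro Y hY
      rw [this Y hY, this X hX]
  have hx0 : ∀ i, X none ⬝ᵥ (e (some i) - x i • e none) = 0 := by
    intro i
    simp [he, hx, (hC X hX).2.1, (hC X hX).2.2]
  have hii : ∀ i, vecMulVec (e (some i)) (e (some i)) ∈ S := by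
    intro i
    have h1 : vecMulVec (e (some i)) (e (some i)) = (1 - 2 * x i) •
        (vecMulVec (e (some i) - x i • e none) (e (some i) - x i • e none)
        + x i • (vecMulVec (e none) (e (some i)) + vecMulVec (e (some i)) (e none)
      - (2 : ℝ) • vecMulVec (e (some i)) (e (some i)))
        - (x i ^ 2) • vecMulVec (e none) (e none)) := by
      have h2 : (1 - 2 * x i) ^ 2 = 1 := by
        have : x i ^ 2 = x i := h i
        linear_combination 4 * this
      ext a b
      simp [vecMulVec_apply]
      linear_combination (-(e (some i) a * e (some i) b)) * h2
    rw [h1]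
    exact S.smul_mem _ (S.sub_mem (S.add_mem (hv _ (hx0 i)) (S.smul_mem _ (hA i)))
      (S.smul_mem _ h00))
  have h0i : ∀ i, vecMulVec (e none) (e (some i)) + vecMulVec (e (some i)) (e none) ∈ S := by
    intro i
    have := S.add_mem (hA i) (S.smul_mem 2 (hii i))
    rwa [sub_add_cancel] at this
  have hij : ∀ i j, vecMulVec (e (some i)) (e (some j)) + vecMulVec (e (some j)) (e (some i)) ∈ S := by
    intro i j
    have h1 : vecMulVec (e (some i)) (e (some j)) + vecMulVec (e (some j)) (e (some i)) =
        vecMulVec ((e (some i) - x i • e none) + (e (some j) - x j • e none))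
          ((e (some i) - x i • e none) + (e (some j) - x j • e none))
        - vecMulVec (e (some i) - x i • e none) (e (some i) - x i • e none)
        - vecMulVec (e (some j) - x j • e none) (e (some j) - x j • e none)
        + x i • (vecMulVec (e none) (e (some j)) + vecMulVec (e (some j)) (e none))
        + x j • (vecMulVec (e none) (e (some i)) + vecMulVec (e (some i)) (e none))
        - (2 * x i * x j) • vecMulVec (e none) (e none) := by
      ext a b
      simp [vecMulVec_apply]
      ring
    rw [h1]
    have h3 := hv ((e (some i) - x i • e none) + (e (some j) - x j • e none)) (by
      rw [dotProduct_add, hx0, hx0, add_zero])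
    exact S.sub_mem (S.add_mem (S.add_mem (S.sub_mem (S.sub_mem h3 (hv _ (hx0 i))) (hv _ (hx0 j)))
      (S.smul_mem _ (h0i j))) (S.smul_mem _ (h0i i))) (S.smul_mem _ h00)
  have hall : ∀ i j, vecMulVec (e i) (e j) + vecMulVec (e j) (e i) ∈ S := by
    intro i j
    cases i with
    | none => cases j with
      | none => exact S.add_mem h00 h00
      | some j => exact h0i j
    | some i => cases j with
      | none => rw [add_comm]; exact h0i i
      | some j => exact hij i j
  intro M hM
  have hM : M.IsSymm := hM
  have h1 : M = ∑ i, ∑ j, (M i j / 2) • (vecMulVec (e i) (e j) + vecMulVec (e j) (e i)) := by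
    ext a b
    simp only [Matrix.sum_apply, Matrix.smul_apply, Matrix.add_apply, vecMulVec_apply, he,
      Pi.single_apply, smul_eq_mul, mul_add, Finset.sum_add_distrib, mul_ite, mul_one, mul_zero]
    simp
    have := hM.apply a b
    rw [this]
    ring
  rw [h1]
  exact S.sum_mem fun i _ => S.sum_mem fun j _ => S.smul_mem _ (hall i j)

lemma lin_zero (a b ε : ℝ) (hε : 0 < ε) (h : ∀ t, |t| < ε → t * a + t ^ 2 * b ≤ 0) : a = 0 := by
  by_contra ha
  have ha2 : 0 < a ^ 2 := by positivity
  set s : ℝ := min (ε / (2 * |a|)) (1 / (2 * (|b| + 1))) with hs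
  have hapos : 0 < |a| := abs_pos.2 ha
  have hs0 : 0 < s := by rw [hs]; positivity
  have hs1 : s ≤ ε / (2 * |a|) := min_le_left _ _
  have hs2 : s ≤ 1 / (2 * (|b| + 1)) := min_le_right _ _
  have h1 := h (s * a) (by
    rw [abs_mul, abs_of_pos hs0]
    rw [le_div_iff₀ (by positivity)] at hs1
    linarith)
  rw [le_div_iff₀ (by positivity)] at hs2
  have h2 : s * a ^ 2 * (1 + s * b) ≤ 0 := by linarith
  have h3 : -|b| ≤ b := neg_abs_le b
  have h4 : 0 < 1 + s * b := by nlinarith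
  have : 0 < s * a ^ 2 * (1 + s * b) := by positivity
  linarith

lemma exists_tangent {V : Type*} [Fintype V] [DecidableEq V]
    (Ep Em : Set (V × V))
    (Ch : Set (Matrix (Option V) (Option V) ℝ))
    (hCh : Ch = {X | X.PosSemidef ∧ X none none = 1 ∧
      (∀ i : V, X none (some i) = X (some i) (some i)) ∧
      (∀ e ∈ Ep, 0 ≤ X (some e.1) (some e.2)) ∧
      (∀ e ∈ Em, X (some e.1) (some e.2) ≤ 0)})
    (X : Matrix (Option V) (Option V) ℝ) (hX : X ∈ Ch) (k : V)
    (hk : X (some k) (some k) ^ 2 ≠ X (some k) (some k)) :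
    ∃ Z : Matrix (Option V) (Option V) ℝ, Z.IsSymm ∧ Z ≠ 0 ∧
      ∀ c ∈ normalConeM Ch X, (c * Z).trace = 0 := by
  have hX' := hX
  rw [hCh] at hX'
  obtain ⟨hP, h00, h0, hp, hm⟩ := hX'
  have hsymm : ∀ i j, X i j = X j i := fun i j => by
    simpa using hP.isHermitian.apply j i
  set xk := X (some k) (some k) with hxk
  have hxk0 : xk ≠ 0 := by intro h; apply hk; rw [h]; norm_num
  have hxk1 : 1 - xk ≠ 0 := by
    intro h; apply hk; have : xk = 1 := by linarith
    rw [this]; norm_num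
  have hN : 0 ≤ xk - xk ^ 2 := by
    have h1 := hP.dotProduct_mulVec_nonneg (Pi.single (some k) 1 - xk • Pi.single none 1)
    rw [star_trivial, quad_eval X h00 hsymm h0] at h1
    linarith
  have hzero : ∀ i : V, X (some i) (some i) = 0 → X (some k) (some i) = 0 := by
    intro i hi
    have h2 : X *ᵥ (Pi.single (some i) 1) = 0 := by
      rw [← hP.dotProduct_mulVec_zero_iff]
      simp [hi]
    have h3 := congrFun h2 (some k)
    simpa using h3
  let b : V → ℝ := fun i => X (some k) (some i) / X (some i) (some i) - xk
  have hb : ∀ i, b i * X (some i) (some i) = X (some k) (some i) - xk * X (some i) (some i) := by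
    intro i
    by_cases hi : X (some i) (some i) = 0
    · rw [hi, hzero i hi]; ring
    · simp only [b]; field_simp
  -- the columns of `B`
  let B : Matrix (Option V) (Option V) ℝ := Matrix.of fun r c => match c with
    | none => (Pi.single (some k) 1 - xk • Pi.single none 1 : Option V → ℝ) r
    | some i => b i * (Pi.single (some i) 1 : Option V → ℝ) r
  have colB0 : B *ᵥ (Pi.single none 1) = Pi.single (some k) 1 - xk • Pi.single none 1 := by
    ext r; simp [B]
  have XB0 : ∀ r, (X * B) r none = X r (some k) - xk * X r none := by
    intro r
    have : (X * B) r none = (X *ᵥ (Pi.single (some k) 1 - xk • Pi.single none 1)) r := rfl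
    rw [this]
    simp [Matrix.mulVec_sub, Matrix.mulVec_smul]
  have XBi : ∀ r i, (X * B) r (some i) = b i * X r (some i) := by
    intro r i
    have : (X * B) r (some i) = (X *ᵥ (b i • Pi.single (some i) 1)) r := rfl
    rw [this]
    simp [Matrix.mulVec_smul]
  have BM0 : ∀ (M : Matrix (Option V) (Option V) ℝ) r,
      (Bᵀ * M) none r = M (some k) r - xk * M none r := by
    intro M r
    have : (Bᵀ * M) none r = (Pi.single (some k) 1 - xk • Pi.single none 1) ⬝ᵥ (fun j => M j r) := rfl
    rw [this]
    simp [sub_dotProduct]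
  have BMi : ∀ (M : Matrix (Option V) (Option V) ℝ) i r,
      (Bᵀ * M) (some i) r = b i * M (some i) r := by
    intro M i r
    have : (Bᵀ * M) (some i) r = (b i • Pi.single (some i) 1) ⬝ᵥ (fun j => M j r) := rfl
    rw [this]
    simp
  let Z := Bᵀ * X + X * B
  have hXT : Xᵀ = X := by ext i j; exact hsymm j i
  refine ⟨Z, ?_, ?_, ?_⟩
  · change Zᵀ = Z
    simp only [Z, transpose_add, transpose_mul, transpose_transpose, hXT]
    rw [add_comm]
  · intro hZ
    have h1 := congrFun (congrFun hZ (some k)) (some k)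
    simp only [Z, Matrix.add_apply, XBi, BMi, Matrix.zero_apply] at h1
    have h2 := hb k
    rw [← hxk] at h1 h2
    have : xk * (1 - xk) = 0 := by linarith
    exact (mul_ne_zero hxk0 hxk1) this
  · intro c hc
    set T : ℝ := 1 + ∑ i, |b i| with hT
    have hsum : 0 ≤ ∑ i, |b i| := Finset.sum_nonneg fun i _ => abs_nonneg _
    have hTpos : 0 < T := by linarith
    apply lin_zero _ ((c * (Bᵀ * (X * B))).trace - (xk - xk ^ 2) * (c * X).trace) T⁻¹ (by positivity)
    intro t ht
    have hpos : ∀ i, 0 < 1 + t * b i := by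
      intro i
      have h1 : |b i| ≤ ∑ i, |b i| :=
        Finset.single_le_sum (f := fun i => |b i|) (fun i _ => abs_nonneg _) (Finset.mem_univ i)
      have h2 : |t * b i| < 1 := by
        rw [abs_mul]
        calc |t| * |b i| ≤ |t| * T := by gcongr; linarith
          _ < T⁻¹ * T := by gcongr
          _ = 1 := inv_mul_cancel₀ hTpos.ne'
      have := neg_abs_le (t * b i)
      linarith
    set N : ℝ := 1 + t ^ 2 * (xk - xk ^ 2) with hNdef
    have hNpos : 0 < N := by positivity
    let W := X + t • Z + t ^ 2 • (Bᵀ * (X * B))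
    have hW : W = (1 + t • B)ᵀ * X * (1 + t • B) := by
      simp only [W, Z, transpose_add, transpose_one, transpose_smul, Matrix.add_mul, Matrix.mul_add,
        Matrix.one_mul, Matrix.mul_one, Matrix.smul_mul, Matrix.mul_smul, smul_smul, smul_add, sq,
        Matrix.mul_assoc]
      abel
    have hWP : W.PosSemidef := by
      rw [hW]
      have := hP.conjTranspose_mul_mul_same (1 + t • B)
      simpa using this
    have W00 : W none none = N := by
      simp only [W, Z, Matrix.add_apply, Matrix.smul_apply, BM0, XB0, h00, smul_eq_mul,
        hsymm (some k) none, h0, hNdef, ← hxk]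
      ring
    have W0i : ∀ i, W none (some i) = (1 + t * b i) ^ 2 * X (some i) (some i) := by
      intro i
      simp only [W, Z, Matrix.add_apply, Matrix.smul_apply, BM0, XBi, smul_eq_mul, h0]
      linear_combination (-(t + t ^ 2 * b i)) * hb i
    have Wij : ∀ i j, W (some i) (some j) = (1 + t * b i) * (1 + t * b j) * X (some i) (some j) := by
      intro i j
      simp only [W, Z, Matrix.add_apply, Matrix.smul_apply, BMi, XBi, smul_eq_mul]
      ring
    have hmem : N⁻¹ • W ∈ Ch := by
      rw [hCh]
      refine ⟨hWP.smul (by positivity), ?_, ?_, ?_, ?_⟩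
      · rw [Matrix.smul_apply, W00, smul_eq_mul, inv_mul_cancel₀ hNpos.ne']
      · intro i
        rw [Matrix.smul_apply, Matrix.smul_apply, W0i, Wij]
        ring_nf
      · intro e he
        rw [Matrix.smul_apply, Wij, smul_eq_mul]
        have := hp e he
        have := hpos e.1
        have := hpos e.2
        positivity
      · intro e he
        rw [Matrix.smul_apply, Wij, smul_eq_mul]
        have h1 := hm e he
        have h2 := hpos e.1
        have h3 := hpos e.2
        exact mul_nonpos_of_nonneg_of_nonpos (by positivity)
          (mul_nonpos_of_nonneg_of_nonpos (by positivity) h1)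
    have h5 := hc.2 _ hmem
    rw [Matrix.mul_smul, trace_smul, smul_eq_mul, inv_mul_le_iff₀ hNpos] at h5
    simp only [W, Matrix.mul_add, Matrix.mul_smul, trace_add, trace_smul, smul_eq_mul] at h5
    rw [hNdef] at h5
    linarith

theorem lifted_theta_variant_vertex_iff_rank_one {V : Type*} [Fintype V] [DecidableEq V]
    (Ep Em : Set (V × V)) (hEp : ∀ e ∈ Ep, e.1 ≠ e.2) (hEm : ∀ e ∈ Em, e.1 ≠ e.2)
    (Ch : Set (Matrix (Option V) (Option V) ℝ))
    (hCh : Ch = {X | X.PosSemidef ∧ X none none = 1 ∧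
      (∀ i : V, X none (some i) = X (some i) (some i)) ∧
      (∀ e ∈ Ep, 0 ≤ X (some e.1) (some e.2)) ∧
      (∀ e ∈ Em, X (some e.1) (some e.2) ≤ 0)})
    (X : Matrix (Option V) (Option V) ℝ) (hX : X ∈ Ch) :
    IsVertex Ch X ↔ X.rank = 1 := by
  have hC : ∀ X ∈ Ch, X.PosSemidef ∧ X none none = 1 ∧
      (∀ i : V, X none (some i) = X (some i) (some i)) := by
    intro Y hY
    rw [hCh] at hY
    exact ⟨hY.1, hY.2.1, hY.2.2.1⟩
  obtain ⟨hP, h00, h0⟩ := hC X hX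
  have hsymm : ∀ i j, X i j = X j i := fun i j => by
    simpa using hP.isHermitian.apply j i
  rw [isVertex_iff_span Ch X hX, rank_one_iff X hP h00 hsymm h0]
  constructor
  · intro h k
    by_contra hk
    obtain ⟨Z, hZs, hZ0, hZ⟩ := exists_tangent Ep Em Ch hCh X hX k hk
    have hmem : Z ∈ Submodule.span ℝ (normalConeM Ch X) := by
      rw [h]; exact hZs
    have hall : ∀ c ∈ Submodule.span ℝ (normalConeM Ch X), (c * Z).trace = 0 := by
      intro c hc
      induction hc using Submodule.span_induction with
      | mem c hc => exact hZ c hc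
      | zero => simp
      | add a b _ _ ha hb => rw [Matrix.add_mul, trace_add, ha, hb, add_zero]
      | smul r a _ ha => rw [Matrix.smul_mul, trace_smul, ha, smul_zero]
    have h1 := hall Z hmem
    have h2 : (Zᴴ * Z).trace = 0 := by
      rw [conjTranspose_eq_transpose_of_trivial, hZs.eq]; exact h1
    exact hZ0 (trace_conjTranspose_mul_self_eq_zero_iff.1 h2)
  · intro h
    exact le_antisymm (span_normal_le Ch X) (span_full Ch hC X hX h)
end

section
/- Let K ⊆ E be a pointed closed convex cone with nonempty interior, A : E → F* linear, b ∈ F*, c ∈ E*, C_P := {x ∈ K : A(x) = b}, C_D := {s ∈ K* : s ∈ Im(A*) − c}. Assume C_P meets the interior of K. Then for x̄ ∈ C_P, there exists s̄ ∈ C_D such that (x̄, s̄) is strictly complementary if and only if c ∈ relint(N_{C_P}(x̄)). -/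
open RealInnerProductSpace

/-- The normal cone of a convex set `C` at a point `x`. -/
def normalCone {E : Type*} [NormedAddCommGroup E] [InnerProductSpace ℝ E]
    (C : Set E) (x : E) : Set E :=
  {c | ∀ y ∈ C, ⟪c, y⟫ ≤ ⟪c, x⟫}

section RelintHelpers

variable {E : Type*} [NormedAddCommGroup E] [InnerProductSpace ℝ E]

theorem relint_metric {C : Set E} {x : E} :
    x ∈ intrinsicInterior ℝ C ↔ x ∈ affineSpan ℝ C ∧
      ∃ ε > 0, ∀ v ∈ affineSpan ℝ C, dist v x < ε → v ∈ C := by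
  rw [mem_intrinsicInterior]
  constructor
  · rintro ⟨y, hy, rfl⟩
    refine ⟨y.2, ?_⟩
    rw [mem_interior_iff_mem_nhds, Metric.mem_nhds_iff] at hy
    obtain ⟨ε, hε, h⟩ := hy
    refine ⟨ε, hε, fun v hv hd => ?_⟩
    have : (⟨v, hv⟩ : affineSpan ℝ C) ∈ Metric.ball y ε := by
      rw [Metric.mem_ball, Subtype.dist_eq]; exact hd
    exact h this
  · rintro ⟨hx, ε, hε, h⟩
    refine ⟨⟨x, hx⟩, ?_, rfl⟩
    rw [mem_interior_iff_mem_nhds, Metric.mem_nhds_iff]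
    refine ⟨ε, hε, fun v hv => ?_⟩
    rw [Metric.mem_ball, Subtype.dist_eq] at hv
    exact h v v.2 hv

theorem relint_extend {C : Set E} {x : E} (hx : x ∈ intrinsicInterior ℝ C) {y : E} (hy : y ∈ C) :
    ∃ ε : ℝ, 0 < ε ∧ x + ε • (x - y) ∈ C := by
  obtain ⟨hxs, δ, hδ, h⟩ := relint_metric.1 hx
  have hn : 0 < ‖x - y‖ + 1 := by positivity
  refine ⟨δ / (‖x - y‖ + 1), by positivity, h _ ?_ ?_⟩
  · have := AffineSubspace.smul_vsub_vadd_mem (affineSpan ℝ C) (δ / (‖x - y‖ + 1)) hxs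
      (subset_affineSpan ℝ C hy) hxs
    simpa [add_comm] using this
  · rw [dist_eq_norm, add_sub_cancel_left, norm_smul, Real.norm_of_nonneg (by positivity),
      div_mul_eq_mul_div, div_lt_iff₀ hn]
    nlinarith

theorem relint_of_extend [FiniteDimensional ℝ E] {C : Set E} (hC : Convex ℝ C) {x : E} (hx : x ∈ C)
    (h : ∀ y ∈ C, ∃ ε : ℝ, 0 < ε ∧ x + ε • (x - y) ∈ C) :
    x ∈ intrinsicInterior ℝ C := by
  obtain ⟨z, hz⟩ := Set.Nonempty.intrinsicInterior hC ⟨x, hx⟩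
  have hzC := intrinsicInterior_subset hz
  obtain ⟨ε, hε, hw⟩ := h z hzC
  obtain ⟨hzs, δ, hδ, hb⟩ := relint_metric.1 hz
  have hxs := subset_affineSpan ℝ C hx
  refine relint_metric.2 ⟨hxs, ε / (1 + ε) * δ, by positivity, fun v hv hd => ?_⟩
  have hu : z + ((1 + ε) / ε) • (v - x) ∈ C := by
    apply hb
    · have := AffineSubspace.smul_vsub_vadd_mem (affineSpan ℝ C) ((1 + ε) / ε) hv hxs hzs
      simpa [add_comm] using this
    · rw [dist_eq_norm] at hd
      rw [dist_eq_norm, add_sub_cancel_left, norm_smul, Real.norm_of_nonneg (by positivity)]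
      calc (1 + ε) / ε * ‖v - x‖ < (1 + ε) / ε * (ε / (1 + ε) * δ) := by gcongr
        _ = δ := by field_simp
  have := hC hu hw (a := ε / (1 + ε)) (b := 1 / (1 + ε)) (by positivity) (by positivity)
    (by field_simp; ring)
  convert this using 1
  have h1 : (ε / (1 + ε)) * ((1 + ε) / ε) = 1 := by field_simp
  have h2 : (1 / (1 + ε)) * ε = ε / (1 + ε) := by field_simp
  have h3 : (1 / (1 + ε)) + ε / (1 + ε) = 1 := by field_simp
  rw [smul_add, smul_smul, h1, smul_add, smul_smul, h2]
  have h4 : (1 / (1 + ε)) • x + (ε / (1 + ε)) • x = x := by rw [← add_smul, h3, one_smul]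
  rw [smul_sub]
  calc v = v - x + x := by abel
    _ = v - x + ((1 / (1 + ε)) • x + (ε / (1 + ε)) • x) := by rw [h4]
    _ = _ := by module

theorem relint_iff_extend [FiniteDimensional ℝ E] {C : Set E} (hC : Convex ℝ C) {x : E} :
    x ∈ intrinsicInterior ℝ C ↔ x ∈ C ∧ ∀ y ∈ C, ∃ ε : ℝ, 0 < ε ∧ x + ε • (x - y) ∈ C :=
  ⟨fun h => ⟨intrinsicInterior_subset h, fun _ hy => relint_extend h hy⟩,
    fun h => relint_of_extend hC h.1 h.2⟩

theorem mem_range_adjoint {F : Type*} [FiniteDimensional ℝ E]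
    [NormedAddCommGroup F] [InnerProductSpace ℝ F] [FiniteDimensional ℝ F]
    (A : E →ₗ[ℝ] F) (g : E) (hg : ∀ v, A v = 0 → ⟪g, v⟫ = 0) :
    ∃ y, g = LinearMap.adjoint A y := by
  have : g ∈ LinearMap.range (LinearMap.adjoint A) := by
    rw [← Submodule.orthogonal_orthogonal (LinearMap.range (LinearMap.adjoint A)),
      Submodule.mem_orthogonal']
    intro v hv
    apply hg
    rw [Submodule.mem_orthogonal'] at hv
    have := hv _ ⟨A v, rfl⟩
    rw [LinearMap.adjoint_inner_right] at this
    exact inner_self_eq_zero.1 this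
  obtain ⟨y, hy⟩ := this
  exact ⟨y, hy.symm⟩

theorem normal_decomp {F : Type*} [FiniteDimensional ℝ E]
    [NormedAddCommGroup F] [InnerProductSpace ℝ F] [FiniteDimensional ℝ F]
    (K : Set E) (hKclosed : IsClosed K) (hKconv : Convex ℝ K)
    (hKcone : ∀ x ∈ K, ∀ t : ℝ, 0 ≤ t → t • x ∈ K)
    (A : E →ₗ[ℝ] F) (b : F) (xh : E) (hxh : xh ∈ interior K) (hAxh : A xh = b)
    (xb : E) (hxb : xb ∈ K) (hAxb : A xb = b) (n : E)
    (hn : n ∈ normalCone {x ∈ K | A x = b} xb) :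
    ∃ y : F, (∀ x ∈ K, 0 ≤ ⟪LinearMap.adjoint A y - n, x⟫) ∧
      ⟪LinearMap.adjoint A y - n, xb⟫ = 0 := by
  by_cases hdeg : ∀ v, A v = 0 → ⟪n, v⟫ = 0
  · obtain ⟨y, hy⟩ := mem_range_adjoint A n hdeg
    exact ⟨y, by simp [hy], by simp [hy]⟩
  push Not at hdeg
  obtain ⟨v0, hv0, hnv0⟩ : ∃ v, A v = 0 ∧ 0 < ⟪n, v⟫ := by
    obtain ⟨v, hv, hne⟩ := hdeg
    rcases lt_or_gt_of_ne hne with h | h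
    · exact ⟨-v, by simp [hv], by rw [inner_neg_right]; linarith⟩
    · exact ⟨v, hv, h⟩
  have hHconv : Convex ℝ {y | A y = b ∧ ⟪n, xb⟫ < ⟪n, y⟫} := by
    intro p hp q hq s t hs ht hst
    refine ⟨?_, ?_⟩
    · rw [map_add, map_smul, map_smul, hp.1, hq.1, ← add_smul, hst, one_smul]
    · rw [inner_add_right, inner_smul_right, inner_smul_right]
      have h1 := hp.2
      have h2 := hq.2
      rcases hs.eq_or_lt with rfl | hs
      · have : t = 1 := by linarith
        subst this; linarith
      · have e : t = 1 - s := by linarith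
        subst e
        nlinarith [mul_pos hs (sub_pos.2 h1), mul_nonneg ht (sub_pos.2 h2).le]
  have hdisj : Disjoint (interior K) {y | A y = b ∧ ⟪n, xb⟫ < ⟪n, y⟫} := by
    rw [Set.disjoint_left]
    rintro y hy ⟨h1, h2⟩
    have := hn y ⟨interior_subset hy, h1⟩
    linarith
  obtain ⟨φ, u, hφ1, hφ2⟩ := geometric_hahn_banach_open hKconv.interior isOpen_interior hHconv hdisj
  -- `φ ≤ u` on `K`
  have hle : ∀ x ∈ K, φ x ≤ u := by
    intro x hx
    have hcl : x ∈ closure (interior K) := by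
      rw [hKconv.closure_interior_eq_closure_of_nonempty_interior ⟨xh, hxh⟩]
      exact subset_closure hx
    have : closure (interior K) ⊆ {x | φ x ≤ u} :=
      closure_minimal (fun a ha => (hφ1 a ha).le) (isClosed_le φ.continuous continuous_const)
    exact this hcl
  have hu0 : 0 ≤ u := by
    have := hle _ (hKcone xb hxb 0 le_rfl)
    simpa using this
  have hKneg : ∀ x ∈ K, φ x ≤ 0 := by
    intro x hx
    by_contra hpos
    push Not at hpos
    have := hle _ (hKcone x hx ((u + 1) / φ x) (by positivity))
    rw [map_smul, smul_eq_mul, div_mul_cancel₀ _ hpos.ne'] at this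
    linarith
  have hxbu : u ≤ φ xb := by
    by_contra hlt
    push Not at hlt
    have key : ∀ ε : ℝ, 0 < ε → u ≤ φ xb + ε * φ v0 := by
      intro ε hε
      have := hφ2 (xb + ε • v0) ⟨by simp [hAxb, hv0], by
        rw [inner_add_right, inner_smul_right]; nlinarith [mul_pos hε hnv0]⟩
      simpa using this
    have h1 := key 1 one_pos
    have hv : 0 < φ v0 := by linarith
    have h2 := key ((u - φ xb) / (2 * φ v0)) (by apply div_pos <;> linarith)
    have h3 : (u - φ xb) / (2 * φ v0) * φ v0 = (u - φ xb) / 2 := by field_simp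
    linarith
  have hxb0 : φ xb = 0 := le_antisymm (hKneg xb hxb) (by linarith)
  have hpos : ∀ w, A w = 0 → 0 ≤ ⟪n, w⟫ → 0 ≤ φ w := by
    intro w hw hnw
    by_contra hlt
    push Not at hlt
    have key : ∀ t : ℝ, 0 ≤ t → u ≤ φ xb + φ v0 + t * φ w := by
      intro t ht
      have := hφ2 (xb + v0 + t • w) ⟨by simp [hAxb, hv0, hw], by
        rw [inner_add_right, inner_add_right, inner_smul_right]
        nlinarith [mul_nonneg ht hnw]⟩
      simpa using this
    have h0 := key 0 le_rfl
    have h1 := key ((φ xb + φ v0 - u + 1) / (- φ w)) (div_nonneg (by linarith) (by linarith))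
    have h2 : (φ xb + φ v0 - u + 1) / (- φ w) * φ w = -(φ xb + φ v0 - u + 1) := by
      have : φ w ≠ 0 := hlt.ne
      field_simp
    linarith
  have hzero : ∀ w, A w = 0 → ⟪n, w⟫ = 0 → φ w = 0 := by
    intro w hw hnw
    have h1 := hpos w hw hnw.ge
    have h2 := hpos (-w) (by simp [hw]) (by simp [hnw])
    rw [map_neg] at h2
    linarith
  set lam : ℝ := φ v0 / ⟪n, v0⟫ with hlam
  have hker : ∀ w, A w = 0 → φ w = lam * ⟪n, w⟫ := by
    intro w hw
    have h := hzero (w - (⟪n, w⟫ / ⟪n, v0⟫) • v0) (by simp [hw, hv0]) (by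
      rw [inner_sub_right, inner_smul_right, div_mul_cancel₀ _ hnv0.ne', sub_self])
    rw [map_sub, map_smul, smul_eq_mul, sub_eq_zero] at h
    rw [h, hlam]; ring
  have hlam_pos : 0 < lam := by
    have h0 : 0 ≤ lam := div_nonneg (hpos v0 hv0 hnv0.le) hnv0.le
    rcases h0.eq_or_lt with h | h
    · exfalso
      have h1 := hker (xh - xb) (by simp [hAxh, hAxb])
      rw [← h, zero_mul, map_sub] at h1
      have := hφ1 xh hxh
      linarith
    · exact h
  set p : E := (InnerProductSpace.toDual ℝ E).symm φ with hp
  have hpφ : ∀ x, ⟪p, x⟫ = φ x := fun x => InnerProductSpace.toDual_symm_apply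
  obtain ⟨y, hy⟩ := mem_range_adjoint A (n - lam⁻¹ • p) (by
    intro v hv
    rw [inner_sub_left, real_inner_smul_left, hpφ, hker v hv]
    field_simp
    ring)
  have hs : LinearMap.adjoint A y - n = - (lam⁻¹ • p) := by rw [← hy]; abel
  refine ⟨y, fun x hx => ?_, ?_⟩
  · rw [hs, inner_neg_left, real_inner_smul_left, hpφ]
    have := hKneg x hx
    have : 0 ≤ lam⁻¹ * (- φ x) := mul_nonneg (by positivity) (by linarith)
    linarith
  · rw [hs, inner_neg_left, real_inner_smul_left, hpφ, hxb0]; simp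

end RelintHelpers

theorem strict_complementarity_iff_relint_normal_cone
    {E F : Type*} [NormedAddCommGroup E] [InnerProductSpace ℝ E] [FiniteDimensional ℝ E]
    [NormedAddCommGroup F] [InnerProductSpace ℝ F] [FiniteDimensional ℝ F]
    (K : Set E) (hKclosed : IsClosed K) (hKconv : Convex ℝ K)
    (hKcone : ∀ x ∈ K, ∀ t : ℝ, 0 ≤ t → t • x ∈ K)
    (hKpointed : ∀ x ∈ K, -x ∈ K → x = 0)
    (hKint : (interior K).Nonempty)
    (A : E →ₗ[ℝ] F) (b : F) (c : E)
    (CP : Set E) (hCP : CP = {x ∈ K | A x = b})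
    (CD : Set E)
    (hCD : CD = {s | (∀ x ∈ K, 0 ≤ ⟪s, x⟫) ∧ ∃ y : F, s = LinearMap.adjoint A y - c})
    (hSlater : ∃ x ∈ CP, x ∈ interior K)
    (xb : E) (hxb : xb ∈ CP) :
    (∃ s ∈ CD, ∃ Fc : Set E, IsExtreme ℝ K Fc ∧ Convex ℝ Fc ∧
        xb ∈ intrinsicInterior ℝ Fc ∧
        s ∈ intrinsicInterior ℝ {t | (∀ x ∈ K, 0 ≤ ⟪t, x⟫) ∧ ∀ f ∈ Fc, ⟪t, f⟫ = 0})
      ↔ c ∈ intrinsicInterior ℝ (normalCone CP xb) := by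
  subst hCP hCD
  obtain ⟨xh, ⟨-, hAxh⟩, hxh⟩ := hSlater
  obtain ⟨hxbK, hAxb⟩ := hxb
  have hKadd : ∀ x ∈ K, ∀ y ∈ K, x + y ∈ K := by
    intro x hx y hy
    have := hKcone _ (hKconv hx hy (a := 1 / 2) (b := 1 / 2) (by norm_num) (by norm_num)
      (by norm_num)) 2 (by norm_num)
    rw [smul_add, smul_smul, smul_smul] at this
    norm_num at this
    exact this
  -- the dual face exposed by `xb`
  set D : Set E := {t | (∀ x ∈ K, 0 ≤ ⟪t, x⟫) ∧ ⟪t, xb⟫ = 0} with hD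
  have hDcomb : ∀ p ∈ D, ∀ q ∈ D, ∀ s t : ℝ, 0 ≤ s → 0 ≤ t → s • p + t • q ∈ D := by
    intro p hp q hq s t hs ht
    refine ⟨fun x hx => ?_, ?_⟩
    · rw [inner_add_left, real_inner_smul_left, real_inner_smul_left]
      have := hp.1 x hx
      have := hq.1 x hx
      positivity
    · rw [inner_add_left, real_inner_smul_left, real_inner_smul_left, hp.2, hq.2]; simp
  have hDconv : Convex ℝ D := fun p hp q hq s t hs ht _ => hDcomb p hp q hq s t hs ht
  have h0D : (0 : E) ∈ D := ⟨by simp, by simp⟩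
  have hNconv : Convex ℝ (normalCone {x ∈ K | A x = b} xb) := by
    intro p hp q hq s t hs ht _ y hy
    have h1 := hp y hy
    have h2 := hq y hy
    simp only [inner_add_left, real_inner_smul_left]
    gcongr
  have hNof : ∀ y : F, ∀ d ∈ D, LinearMap.adjoint A y - d ∈ normalCone {x ∈ K | A x = b} xb := by
    intro y d hd z hz
    have := hd.1 z hz.1
    rw [inner_sub_left, inner_sub_left, LinearMap.adjoint_inner_left, LinearMap.adjoint_inner_left,
      hz.2, hAxb, hd.2]
    linarith
  have hNdec : ∀ n ∈ normalCone {x ∈ K | A x = b} xb, ∃ y : F, LinearMap.adjoint A y - n ∈ D :=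
    fun n hn => normal_decomp K hKclosed hKconv hKcone A b xh hxh hAxh xb hxbK hAxb n hn
  have hface : ∀ Fc : Set E, IsExtreme ℝ K Fc → xb ∈ intrinsicInterior ℝ Fc →
      {t | (∀ x ∈ K, 0 ≤ ⟪t, x⟫) ∧ ∀ f ∈ Fc, ⟪t, f⟫ = 0} = D := by
    intro Fc hext hri
    ext t
    refine ⟨fun h => ⟨h.1, h.2 xb (intrinsicInterior_subset hri)⟩, fun h => ⟨h.1, fun f hf => ?_⟩⟩
    obtain ⟨ε, hε, hmem⟩ := relint_extend hri hf
    have h1 := h.1 _ (hext.subset hmem)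
    have h2 := h.1 _ (hext.subset hf)
    rw [inner_add_right, inner_smul_right, inner_sub_right, h.2] at h1
    nlinarith
  constructor
  · rintro ⟨s, ⟨-, y0, hs⟩, Fc, hext, -, hri, hsri⟩
    rw [hface Fc hext hri] at hsri
    have hsD := intrinsicInterior_subset hsri
    have hc : c = LinearMap.adjoint A y0 - s := by rw [hs]; abel
    refine relint_of_extend hNconv (by rw [hc]; exact hNof _ _ hsD) fun n hn => ?_
    obtain ⟨y, hy⟩ := hNdec n hn
    obtain ⟨ε, hε, hmem⟩ := relint_extend hsri hy
    refine ⟨ε, hε, ?_⟩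
    have := hNof (y0 + ε • (y0 - y)) _ hmem
    convert this using 1
    rw [hc]
    simp only [map_add, map_smul, map_sub]
    module
  · intro hc
    obtain ⟨d0, hd0⟩ := Set.Nonempty.intrinsicInterior hDconv ⟨0, h0D⟩
    have hd0D := intrinsicInterior_subset hd0
    have hn0 : -d0 ∈ normalCone {x ∈ K | A x = b} xb := by
      have := hNof 0 d0 hd0D
      simpa using this
    obtain ⟨ε, hε, hmem⟩ := relint_extend hc hn0
    obtain ⟨y, hy⟩ := hNdec _ hmem
    set d := LinearMap.adjoint A y - (c + ε • (c - -d0)) with hd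
    have h1ε : (1 + ε) ≠ 0 := by positivity
    set s := LinearMap.adjoint A ((1 / (1 + ε)) • y) - c with hs
    have hsd : s = (1 / (1 + ε)) • d + (ε / (1 + ε)) • d0 := by
      rw [hs, hd, map_smul]
      match_scalars <;> field_simp <;> ring
    have hsD : s ∈ D := by
      rw [hsd]; exact hDcomb _ hy _ hd0D _ _ (by positivity) (by positivity)
    have hsri : s ∈ intrinsicInterior ℝ D := by
      refine relint_of_extend hDconv hsD fun e he => ?_
      obtain ⟨δ, hδ, hm⟩ := relint_extend hd0 he
      refine ⟨ε * δ / (1 + ε + δ), by positivity, ?_⟩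
      have := hDcomb _ hy _ hm ((1 + ε * δ / (1 + ε + δ)) / (1 + ε)) (ε / (1 + ε + δ))
        (by positivity) (by positivity)
      convert this using 1
      rw [hsd]
      match_scalars <;> field_simp <;> ring
    -- the minimal face
    set Fc : Set E := {y | y ∈ K ∧ ∃ μ : ℝ, μ • xb - y ∈ K} with hFc
    have hFconv : Convex ℝ Fc := by
      rintro p ⟨hp, μ, hμ⟩ q ⟨hq, ν, hν⟩ α β hα hβ hαβ
      refine ⟨hKconv hp hq hα hβ hαβ, α * μ + β * ν, ?_⟩
      convert hKconv hμ hν hα hβ hαβ using 1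
      module
    have hFext : IsExtreme ℝ K Fc := by
      refine ⟨fun z hz => hz.1, ?_⟩
      rintro p hp q hq z ⟨hz, μ, hμ⟩ ⟨α, β, hα, hβ, hαβ, rfl⟩
      refine ⟨hp, μ / α, ?_⟩
      have := hKcone _ (hKadd _ hμ _ (hKcone q hq β hβ.le)) (1 / α) (by positivity)
      convert this using 1
      match_scalars <;> field_simp
      ring
    have hFri : xb ∈ intrinsicInterior ℝ Fc := by
      refine relint_of_extend hFconv ⟨hxbK, 1, ?_⟩ ?_
      · have := hKcone xb hxbK 0 le_rfl
        simpa using this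
      · rintro z ⟨hz, μ, hμ⟩
        have hpos : 0 < 1 + |μ| := by positivity
        have hε' : 0 < 1 / (1 + |μ|) := by positivity
        refine ⟨1 / (1 + |μ|), hε', ?_, 1 + 1 / (1 + |μ|), ?_⟩
        · have hnn : 0 ≤ 1 + 1 / (1 + |μ|) - 1 / (1 + |μ|) * μ := by
            have h1 : 1 / (1 + |μ|) * μ ≤ 1 := by
              rw [div_mul_eq_mul_div, div_le_one hpos]
              linarith [le_abs_self μ]
            linarith
          convert hKadd _ (hKcone _ hμ _ hε'.le) _ (hKcone _ hxbK _ hnn) using 1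
          module
        · convert hKcone _ hz _ hε'.le using 1
          module
    exact ⟨s, ⟨hsD.1, _, rfl⟩, Fc, hFext, hFconv, hFri, by rw [hface Fc hFext hFri]; exact hsri⟩
end
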